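/- Let M₁ and M₂ be Dieudonné modules over Γ and over 𝓔_+, respectively, such that M₁⊗_Γ 𝓔 and M₂⊗_{𝓔_+} 𝓔 are isomorphic as Dieudonné modules over 𝓔. Then there is a Dieudonné module M_+ over Γ_+ such that M₁ is isomorphic to M_+⊗_{Γ_+}Γ as Dieudonné modules over Γ, and M₂ is isomorphic to M_+⊗_{Γ_+}𝓔_+ as Dieudonné modules over 𝓔_+. -/

import Mathlib

/-!
STATEMENT 5: Let `M₁` and `M₂` be Dieudonné modules over `Γ` and over
`𝓔_+ = Γ_+[1/p]` respectively, such that `M₁⊗_Γ 𝓔` and `M₂⊗_{𝓔_+} 𝓔` are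
isomorphic Dieudonné modules over `𝓔 = Γ[1/p]`.  Then there is a Dieudonné
module `M_+` over `Γ_+ = 𝒪[[u]]` with `M₁ ≅ M_+⊗_{Γ_+}Γ` over `Γ` and
`M₂ ≅ M_+⊗_{Γ_+}𝓔_+` over `𝓔_+`.

Here `𝒪 = W(k)`, `Γ` is the `p`-adic completion of `𝒪((u))`, `f = 1` (so
`q = p`), and `σ` is the Frobenius lift `Σ x_i u^i ↦ Σ σ₀(x_i) u^{ip}` with
`d` the formal derivative in `u`.  Since all the modules involved are finite
free, we state everything concretely in terms of matrices in fixed bases: a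
Dieudonné module of rank `n` over a subring `A ⊆ 𝓔` is given by matrices
`Φ, B, N` with entries in `A` (Frobenius, Verschiebung, connection) satisfying
`Φ·B = B·Φ = p·1`, the `(F,∇)`-compatibility `dΦ + N·Φ = c·(Φ·σ(N))` and the
`(V,∇)`-compatibility `dB + c·(σ(N)·B) = B·N`, where `c = dσ(u)/du = p·u^{p−1}`;
a (iso)morphism is given by an (invertible) matrix `P` over `A` with
`P·Φ = Φ'·σ(P)`, `dP + N'·P = P·N` (and then automatically `B'·P = σ(P)·B`).
-/

set_option synthInstance.maxHeartbeats 1000000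
set_option maxHeartbeats 4000000

noncomputable section

/-- `Γ`: the `p`-adic completion of the Laurent series ring `𝒪((u))`, `𝒪 = W(k)`. -/
abbrev GammaRing (p : ℕ) [Fact p.Prime] (k : Type*) [Field k] [CharP k p] : Type _ :=
  AdicCompletion (Ideal.span {(p : LaurentSeries (WittVector p k))})
    (LaurentSeries (WittVector p k))

/-- `𝓔 = Γ[1/p]`, the fraction field of `Γ`. -/
abbrev ERing (p : ℕ) [Fact p.Prime] (k : Type*) [Field k] [CharP k p] : Type _ :=
  FractionRing (GammaRing p k)

/-- The canonical map `Γ → 𝓔`. -/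
abbrev gammaToE (p : ℕ) [Fact p.Prime] (k : Type*) [Field k] [CharP k p] :
    GammaRing p k →+* ERing p k :=
  algebraMap (GammaRing p k) (ERing p k)

/-- The canonical map `𝒪((u)) → 𝓔`. -/
abbrev laurentToE (p : ℕ) [Fact p.Prime] (k : Type*) [Field k] [CharP k p] :
    LaurentSeries (WittVector p k) →+* ERing p k :=
  (gammaToE p k).comp (algebraMap (LaurentSeries (WittVector p k)) (GammaRing p k))

/-- The canonical map `Γ_+ = 𝒪[[u]] → 𝓔`. -/
abbrev psToE (p : ℕ) [Fact p.Prime] (k : Type*) [Field k] [CharP k p] :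
    PowerSeries (WittVector p k) →+* ERing p k :=
  (laurentToE p k).comp (HahnSeries.ofPowerSeries ℤ (WittVector p k))

/-- The canonical map `𝒪 → 𝓔` (constant series). -/
abbrev wittToE (p : ℕ) [Fact p.Prime] (k : Type*) [Field k] [CharP k p] :
    WittVector p k →+* ERing p k :=
  (laurentToE p k).comp (HahnSeries.C : WittVector p k →+* LaurentSeries (WittVector p k))

/-- The element `u` of `𝓔`. -/
def uE (p : ℕ) [Fact p.Prime] (k : Type*) [Field k] [CharP k p] : ERing p k :=
  laurentToE p k (HahnSeries.single (1 : ℤ) (1 : WittVector p k))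

/-- The image of `Γ` in `𝓔`. -/
def GammaSet (p : ℕ) [Fact p.Prime] (k : Type*) [Field k] [CharP k p] :
    Set (ERing p k) :=
  Set.range (gammaToE p k)

/-- The image of `Γ_+ = 𝒪[[u]]` in `𝓔`. -/
def GammaPlusSet (p : ℕ) [Fact p.Prime] (k : Type*) [Field k] [CharP k p] :
    Set (ERing p k) :=
  Set.range (psToE p k)

/-- `𝓔_+ = Γ_+[1/p]` inside `𝓔`. -/
def EPlusSet (p : ℕ) [Fact p.Prime] (k : Type*) [Field k] [CharP k p] :
    Set (ERing p k) :=
  {x | ∃ (g : PowerSeries (WittVector p k)) (j : ℕ), (p : ERing p k) ^ j * x = psToE p k g}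


set_option linter.unusedSectionVars false
section
open AdicCompletion
variable {R : Type*} [CommRing R] (π : R)

theorem aux_eval_zero_iff (n : ℕ) (x : AdicCompletion (Ideal.span {π}) R) :
    evalₐ (Ideal.span {π}) n x = 0 ↔
      (algebraMap R (AdicCompletion (Ideal.span {π}) R) π) ^ n ∣ x := by
  have fg : (Ideal.span {π}).FG := ⟨{π}, by simp⟩
  constructor
  · intro h
    have hx : x ∈ (eval (Ideal.span {π}) R n).ker := by
      rw [LinearMap.mem_ker]
      have := factor_evalₐ_eq_eval (I := Ideal.span {π}) (n := n) x (by simp)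
      rw [← this, h, _root_.map_zero]
    rw [← pow_smul_top_eq_ker_eval fg, Ideal.span_singleton_pow,
      Submodule.ideal_span_singleton_smul] at hx
    obtain ⟨y, -, rfl⟩ := hx
    refine ⟨y, ?_⟩
    simp [Algebra.smul_def]
  · rintro ⟨y, rfl⟩
    rw [map_mul, map_pow]
    have : (evalₐ (Ideal.span {π}) n) (algebraMap R _ π) ^ n = 0 := by
      rw [AlgHom.commutes, ← map_pow, Ideal.Quotient.algebraMap_eq, Ideal.Quotient.eq_zero_iff_mem]
      exact Ideal.pow_mem_pow (Ideal.mem_span_singleton_self π) n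
    rw [this, zero_mul]

theorem aux_alg_dvd (n : ℕ) (x : R) :
    (algebraMap R (AdicCompletion (Ideal.span {π}) R) π) ^ n ∣ algebraMap R _ x ↔ π ^ n ∣ x := by
  rw [← aux_eval_zero_iff, AlgHom.commutes, Ideal.Quotient.algebraMap_eq,
    Ideal.Quotient.eq_zero_iff_mem, Ideal.span_singleton_pow, Ideal.mem_span_singleton]

theorem aux_approx (n : ℕ) (x : AdicCompletion (Ideal.span {π}) R) :
    ∃ r : R, (algebraMap R (AdicCompletion (Ideal.span {π}) R) π) ^ n ∣ x - algebraMap R _ r := by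
  obtain ⟨r, hr⟩ := Ideal.Quotient.mk_surjective (evalₐ (Ideal.span {π}) n x)
  refine ⟨r, ?_⟩
  rw [← aux_eval_zero_iff, map_sub, AlgHom.commutes, Ideal.Quotient.algebraMap_eq, hr, sub_self]

theorem aux_sep (x : AdicCompletion (Ideal.span {π}) R)
    (h : ∀ n, (algebraMap R (AdicCompletion (Ideal.span {π}) R) π) ^ n ∣ x) : x = 0 := by
  apply ext_evalₐ
  intro n
  rw [_root_.map_zero, aux_eval_zero_iff]
  exact h n

theorem aux_regular (hπ : ∀ x : R, π * x = 0 → x = 0) (x : AdicCompletion (Ideal.span {π}) R)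
    (h : algebraMap R (AdicCompletion (Ideal.span {π}) R) π * x = 0) : x = 0 := by
  apply aux_sep
  intro n
  obtain ⟨r, y, hr⟩ := aux_approx π (n+1) x
  set P := algebraMap R (AdicCompletion (Ideal.span {π}) R) π
  have h1 : P ^ (n+1) ∣ algebraMap R _ (π * r) := by
    refine ⟨- (P * y), ?_⟩
    rw [map_mul]
    linear_combination h - P * hr
  rw [aux_alg_dvd] at h1
  obtain ⟨z, hz⟩ := h1
  have : r = π ^ n * z := by
    rw [← sub_eq_zero]; apply hπ; linear_combination hz
  refine ⟨P * y + algebraMap R _ z, ?_⟩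
  have h2 := congrArg (algebraMap R (AdicCompletion (Ideal.span {π}) R)) this
  rw [map_mul, map_pow] at h2
  linear_combination hr + h2

theorem aux_unit (x y : AdicCompletion (Ideal.span {π}) R)
    (h : algebraMap R (AdicCompletion (Ideal.span {π}) R) π ∣ x * y - 1) : IsUnit x := by
  have fg : (Ideal.span {π}).FG := ⟨{π}, by simp⟩
  have := isAdicComplete_self (Ideal.span {π}) fg
  have := IsAdicComplete.le_jacobson_bot ((Ideal.span {π}).map (algebraMap R (AdicCompletion (Ideal.span {π}) R)))
  have hm : x * y - 1 ∈ ((Ideal.span {π}).map (algebraMap R (AdicCompletion (Ideal.span {π}) R))) := by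
    rw [Ideal.map_span, Set.image_singleton, Ideal.mem_span_singleton]; exact h
  have h3 := Ideal.mem_jacobson_bot.1 (this hm) 1
  have h4 : (x * y - 1) * 1 + 1 = x * y := by ring
  rw [h4] at h3
  exact isUnit_of_mul_isUnit_left h3
end

section
variable (p : ℕ) [Fact p.Prime] (k : Type*) [Field k] [CharP k p]

/-- Coefficientwise reduction `W(k)((u)) → k((u))`. -/
noncomputable def aux_red : LaurentSeries (WittVector p k) →+* LaurentSeries k where
  toFun x := HahnSeries.map x (WittVector.constantCoeff : WittVector p k →+* k)
  map_one' := HahnSeries.map_one (WittVector.constantCoeff : WittVector p k →+* k).toMonoidWithZeroHom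
  map_mul' x y := HahnSeries.map_mul (WittVector.constantCoeff : WittVector p k →+* k).toNonUnitalRingHom
  map_zero' := by ext; simp
  map_add' x y := HahnSeries.map_add (WittVector.constantCoeff : WittVector p k →+* k).toAddMonoidHom

theorem aux_red_coeff (x : LaurentSeries (WittVector p k)) (i : ℤ) :
  (aux_red p k x).coeff i = WittVector.constantCoeff (x.coeff i) := rfl

theorem aux_C : (p : LaurentSeries (WittVector p k)) = HahnSeries.C (p : WittVector p k) := by
  simp

theorem aux_coeff_p (n : ℕ) (x : LaurentSeries (WittVector p k)) (i : ℤ) :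
  ((p : LaurentSeries (WittVector p k))^n * x).coeff i = (p : WittVector p k)^n * x.coeff i := by
  rw [aux_C, ← map_pow, HahnSeries.C_mul_eq_smul]; simp

theorem aux_p_dvd_iff (n : ℕ) (x : LaurentSeries (WittVector p k)) :
    (p : LaurentSeries (WittVector p k))^n ∣ x ↔ ∀ i, (p : WittVector p k)^n ∣ x.coeff i := by
  constructor
  · rintro ⟨y, rfl⟩ i
    rw [aux_coeff_p]; exact dvd_mul_right _ _
  · intro h
    choose f hf using h
    have hp : (p : WittVector p k) ^ n ≠ 0 := pow_ne_zero _ (WittVector.p_nonzero p k)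
    refine ⟨⟨f, ?_⟩, ?_⟩
    · refine x.isPWO_support.mono ?_
      intro i hi h0
      apply hi
      have := hf i
      rw [h0] at this
      exact (mul_eq_zero.1 this.symm).resolve_left hp
    · ext i
      rw [aux_coeff_p, hf]

theorem aux_L_reg (x : LaurentSeries (WittVector p k)) (h : (p : LaurentSeries (WittVector p k)) * x = 0) :
    x = 0 := by
  refine HahnSeries.ext (funext fun i => ?_)
  have := aux_coeff_p p k 1 x i
  rw [pow_one, pow_one, h] at this
  exact (mul_eq_zero.1 this.symm).resolve_left (WittVector.p_nonzero p k)

variable [PerfectRing k p]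

theorem aux_red_zero (x : LaurentSeries (WittVector p k)) :
    aux_red p k x = 0 ↔ (p : LaurentSeries (WittVector p k)) ∣ x := by
  rw [← pow_one (p : LaurentSeries (WittVector p k)), aux_p_dvd_iff, HahnSeries.ext_iff, funext_iff]
  refine forall_congr' fun i => ?_
  rw [aux_red_coeff, pow_one, ← Ideal.mem_span_singleton, WittVector.mem_span_p_iff_coeff_zero_eq_zero]
  rfl

theorem aux_L_sep (x : LaurentSeries (WittVector p k))
    (h : ∀ n, (p : LaurentSeries (WittVector p k)) ^ n ∣ x) : x = 0 := by
  ext i j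
  have := (aux_p_dvd_iff p k (j+1) x).1 (h _) i
  rw [← Ideal.mem_span_singleton, WittVector.mem_span_p_pow_iff_le_coeff_eq_zero] at this
  simpa using this j (by omega)

theorem aux_red_surj (y : LaurentSeries k) : ∃ x, aux_red p k x = y := by
  refine ⟨⟨fun i => WittVector.teichmuller p (y.coeff i), y.isPWO_support.mono ?_⟩, ?_⟩
  · intro i hi h0
    apply hi
    simp only [h0]
    exact WittVector.teichmuller_zero p
  · ext i
    rw [aux_red_coeff]
    exact WittVector.teichmuller_coeff_zero p _
end
section
theorem aux_F {R A : Type*} [CommRing R] [Ring A] [Algebra R A] (c : R)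
    (Z Zi sZ sZi F N sN dF dZ sdZ sdZi : A)
    (h2 : Zi * Z = 1) (s2 : sZi * sZ = 1)
    (hsd : sdZi = - (sZi * sdZ * sZi))
    (hF : dF + N * F = c • (F * sN)) :
    (dZ * F * sZi + Z * dF * sZi + Z * F * (c • sdZi)) + ((Z * N - dZ) * Zi) * (Z * F * sZi)
      = c • ((Z * F * sZi) * ((sZ * sN - sdZ) * sZi)) := by
  have e1 : ((Z * N - dZ) * Zi) * (Z * F * sZi) = (Z * N - dZ) * (Zi * Z) * F * sZi := by noncomm_ring
  have e2 : (Z * F * sZi) * ((sZ * sN - sdZ) * sZi) = Z * F * (sZi * sZ) * sN * sZi - Z * F * (sZi * sdZ * sZi) := by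
    noncomm_ring
  have e3 : dF = c • (F * sN) - N * F := by rw [← hF]; noncomm_ring
  rw [e1, e2, h2, s2, hsd, e3]
  simp only [mul_sub, sub_mul, mul_neg, smul_sub, smul_neg, mul_smul_comm, smul_mul_assoc, mul_one, mul_assoc]
  abel

theorem aux_V {R A : Type*} [CommRing R] [Ring A] [Algebra R A] (c : R)
    (Z Zi sZ sZi B N sN dB dZ dZi sdZ : A)
    (h2 : Zi * Z = 1) (s2 : sZi * sZ = 1)
    (hd : dZi = - (Zi * dZ * Zi))
    (hB : dB + c • (sN * B) = B * N) :
    ((c • sdZ) * B * Zi + sZ * dB * Zi + sZ * B * dZi) + c • (((sZ * sN - sdZ) * sZi) * (sZ * B * Zi))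
      = (sZ * B * Zi) * ((Z * N - dZ) * Zi) := by
  have e1 : ((sZ * sN - sdZ) * sZi) * (sZ * B * Zi) = (sZ * sN - sdZ) * (sZi * sZ) * B * Zi := by noncomm_ring
  have e2 : (sZ * B * Zi) * ((Z * N - dZ) * Zi) = sZ * B * (Zi * Z) * N * Zi - sZ * B * (Zi * dZ * Zi) := by
    noncomm_ring
  have e3 : dB = B * N - c • (sN * B) := by rw [← hB]; noncomm_ring
  rw [e1, e2, h2, s2, hd, e3]
  simp only [mul_sub, sub_mul, mul_neg, smul_sub, mul_smul_comm, smul_mul_assoc, mul_one, mul_assoc]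
  abel

theorem aux_map_d {E : Type*} [CommRing E] {n : ℕ} (d : E → E) (hadd : ∀ a b, d (a + b) = d a + d b)
    (hmul : ∀ a b, d (a * b) = a * d b + b * d a) (A B : Matrix (Fin n) (Fin n) E) :
    (A * B).map d = A.map d * B + A * B.map d := by
  ext i j
  have hs : ∀ g : Fin n → E, d (∑ l, g l) = ∑ l, d (g l) := fun g =>
    map_sum (AddMonoidHom.mk' d hadd) g Finset.univ
  simp only [Matrix.map_apply, Matrix.mul_apply, Matrix.add_apply, hs, hmul,
    ← Finset.sum_add_distrib]
  refine Finset.sum_congr rfl fun l _ => ?_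
  ring

theorem aux_map_d_inv {E : Type*} [CommRing E] {n : ℕ} (d : E → E) (hadd : ∀ a b, d (a + b) = d a + d b)
    (hmul : ∀ a b, d (a * b) = a * d b + b * d a) (Z Zi : Matrix (Fin n) (Fin n) E)
    (h1 : Z * Zi = 1) (h2 : Zi * Z = 1) : Zi.map d = - (Zi * Z.map d * Zi) := by
  have h := aux_map_d d hadd hmul Z Zi
  rw [h1] at h
  have d0 : d 0 = 0 := by simpa using hadd 0 0
  have d1 : d 1 = 0 := by simpa using hmul 1 1
  have h0 : (1 : Matrix (Fin n) (Fin n) E).map d = 0 := by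
    ext i j
    by_cases hij : i = j <;> simp [hij, d0, d1]
  rw [h0] at h
  have := congrArg (fun M => Zi * M) h
  simp only [mul_zero, mul_add, ← mul_assoc, h2, one_mul] at this
  rw [eq_neg_iff_add_eq_zero, add_comm]
  exact this.symm

theorem aux_mul_mem {E : Type*} [CommRing E] {n : ℕ} (S : Subring E) (A B : Matrix (Fin n) (Fin n) E)
    (hA : ∀ i j, A i j ∈ S) (hB : ∀ i j, B i j ∈ S) (i j) : (A * B) i j ∈ S := by
  rw [Matrix.mul_apply]
  exact S.sum_mem fun l _ => S.mul_mem (hA _ _) (hB _ _)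

/-- The formal gluing step. -/
theorem aux_glue {E : Type*} [CommRing E] (q : E) {n : ℕ} (G Gp Ep : Subring E)
    (hinter : ∀ x, x ∈ G → x ∈ Ep → x ∈ Gp)
    (σ : E →+* E) 
    (hσΓ : ∀ x ∈ G, σ x ∈ G) (hσEp : ∀ x ∈ Ep, σ x ∈ Ep)
    (d : E → E) (hadd : ∀ a b, d (a + b) = d a + d b)
    (hmul : ∀ a b, d (a * b) = a * d b + b * d a)
    (hdΓ : ∀ x ∈ G, d x ∈ G) (hdEp : ∀ x ∈ Ep, d x ∈ Ep)
    (c : E) (hdσ : ∀ x ∈ Ep, d (σ x) = c * σ (d x))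
    (Φ₁ B₁ N₁ : Matrix (Fin n) (Fin n) E)
    (hM₁mem : (∀ i j, Φ₁ i j ∈ G) ∧ (∀ i j, B₁ i j ∈ G) ∧ (∀ i j, N₁ i j ∈ G))
    (Φ₂ B₂ N₂ : Matrix (Fin n) (Fin n) E)
    (hM₂mem : (∀ i j, Φ₂ i j ∈ Ep) ∧ (∀ i j, B₂ i j ∈ Ep) ∧ (∀ i j, N₂ i j ∈ Ep))
    (hM₂FV : Φ₂ * B₂ = q • 1 ∧ B₂ * Φ₂ = q • 1)
    (hM₂Fcompat : Φ₂.map d + N₂ * Φ₂ = c • (Φ₂ * N₂.map ⇑σ))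
    (hM₂Vcompat : B₂.map d + c • (N₂.map ⇑σ * B₂) = B₂ * N₂)
    (X : Matrix (Fin n) (Fin n) E)
    (hXF : X * Φ₁ = Φ₂ * X.map ⇑σ)
    (hXnabla : X.map d + N₂ * X = X * N₁)
    (hXV : B₂ * X = X.map ⇑σ * B₁)
    (Z Zi Y Yi : Matrix (Fin n) (Fin n) E)
    (hZ1 : Z * Zi = 1) (hY1 : Y * Yi = 1) (hYZ : Z * X = Y)
    (hZm : ∀ i j, Z i j ∈ Ep) (hZim : ∀ i j, Zi i j ∈ Ep)
    (hYm : ∀ i j, Y i j ∈ G) (hYim : ∀ i j, Yi i j ∈ G) :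
    ∃ Φp Bp Np : Matrix (Fin n) (Fin n) E,
      ((∀ i j, Φp i j ∈ Gp) ∧ (∀ i j, Bp i j ∈ Gp) ∧ (∀ i j, Np i j ∈ Gp)) ∧
      (Φp * Bp = q • 1 ∧ Bp * Φp = q • 1) ∧
      Φp.map d + Np * Φp = c • (Φp * Np.map ⇑σ) ∧
      Bp.map d + c • (Np.map ⇑σ * Bp) = Bp * Np ∧
      (∃ Y Yi : Matrix (Fin n) (Fin n) E,
        (Y * Yi = 1 ∧ Yi * Y = 1) ∧
        (∀ i j, Y i j ∈ G) ∧ (∀ i j, Yi i j ∈ G) ∧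
        Y * Φ₁ = Φp * Y.map ⇑σ ∧
        Y.map d + Np * Y = Y * N₁ ∧
        Bp * Y = Y.map ⇑σ * B₁) ∧
      (∃ Z Zi : Matrix (Fin n) (Fin n) E,
        (Z * Zi = 1 ∧ Zi * Z = 1) ∧
        (∀ i j, Z i j ∈ Ep) ∧ (∀ i j, Zi i j ∈ Ep) ∧
        Z * Φ₂ = Φp * Z.map ⇑σ ∧
        Z.map d + Np * Z = Z * N₂ ∧
        Bp * Z = Z.map ⇑σ * B₂) := by
  have hZ2 : Zi * Z = 1 := mul_eq_one_comm.1 hZ1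
  have hY2 : Yi * Y = 1 := mul_eq_one_comm.1 hY1
  have smul' : ∀ A B : Matrix (Fin n) (Fin n) E, (A * B).map ⇑σ = A.map ⇑σ * B.map ⇑σ :=
    fun A B => Matrix.map_mul
  have sone : (1 : Matrix (Fin n) (Fin n) E).map ⇑σ = 1 := Matrix.map_one _ (map_zero σ) (map_one σ)
  have ssub : ∀ A B : Matrix (Fin n) (Fin n) E, (A - B).map ⇑σ = A.map ⇑σ - B.map ⇑σ :=
    fun A B => by ext; simp
  have sZ1 : Z.map ⇑σ * Zi.map ⇑σ = 1 := by rw [← smul', hZ1, sone]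
  have sZ2 : Zi.map ⇑σ * Z.map ⇑σ = 1 := by rw [← smul', hZ2, sone]
  have sY1 : Y.map ⇑σ * Yi.map ⇑σ = 1 := by rw [← smul', hY1, sone]
  have hdZi := aux_map_d_inv d hadd hmul Z Zi hZ1 hZ2
  have sdZi : (Zi.map d).map ⇑σ = - (Zi.map ⇑σ * (Z.map d).map ⇑σ * Zi.map ⇑σ) := by
    have sneg : ∀ A : Matrix (Fin n) (Fin n) E, (-A).map ⇑σ = -A.map ⇑σ := fun A => by ext; simp
    rw [hdZi, sneg, smul', smul']
  have dsig : ∀ A : Matrix (Fin n) (Fin n) E, (∀ i j, A i j ∈ Ep) →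
      (A.map ⇑σ).map d = c • (A.map d).map ⇑σ := by
    intro A hA; ext i j; simpa using hdσ _ (hA i j)
  -- intertwining for Z
  have zF : Z * Φ₂ = (Z * Φ₂ * Zi.map ⇑σ) * Z.map ⇑σ := by rw [mul_assoc _ _ (Z.map ⇑σ), sZ2, mul_one]
  have zN : Z.map d + ((Z * N₂ - Z.map d) * Zi) * Z = Z * N₂ := by
    rw [mul_assoc _ Zi, hZ2, mul_one]; abel
  have zV : (Z.map ⇑σ * B₂ * Zi) * Z = Z.map ⇑σ * B₂ := by rw [mul_assoc _ Zi, hZ2, mul_one]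
  -- intertwining for Y
  have yF : Y * Φ₁ = (Z * Φ₂ * Zi.map ⇑σ) * Y.map ⇑σ := by
    rw [← hYZ, smul', ← mul_assoc, ← zF, mul_assoc, hXF, mul_assoc]
  have yN : Y.map d + ((Z * N₂ - Z.map d) * Zi) * Y = Y * N₁ := by
    rw [← hYZ, aux_map_d d hadd hmul, mul_assoc Z X N₁, ← hXnabla, ← mul_assoc _ Z X, mul_assoc _ Zi Z, hZ2, mul_one]
    noncomm_ring
  have yV : (Z.map ⇑σ * B₂ * Zi) * Y = Y.map ⇑σ * B₁ := by
    rw [← hYZ, ← mul_assoc, zV, mul_assoc, hXV, smul', mul_assoc]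
  have eF : Z * Φ₂ * Zi.map ⇑σ = Y * Φ₁ * Yi.map ⇑σ := by
    rw [yF, mul_assoc _ (Y.map ⇑σ), sY1, mul_one]
  have eV : Z.map ⇑σ * B₂ * Zi = Y.map ⇑σ * B₁ * Yi := by
    rw [← yV, mul_assoc _ Y, hY1, mul_one]
  have eN : (Z * N₂ - Z.map d) * Zi = (Y * N₁ - Y.map d) * Yi := by
    rw [← yN, add_sub_cancel_left, mul_assoc _ Y, hY1, mul_one]
  refine ⟨Z * Φ₂ * Zi.map ⇑σ, Z.map ⇑σ * B₂ * Zi, (Z * N₂ - Z.map d) * Zi, ⟨?_, ?_, ?_⟩, ⟨?_, ?_⟩, ?_, ?_,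
    ⟨Y, Yi, ⟨hY1, hY2⟩, hYm, hYim, yF, yN, yV⟩, ⟨Z, Zi, ⟨hZ1, hZ2⟩, hZm, hZim, zF, zN, zV⟩⟩
  · intro i j
    apply hinter
    · rw [eF]
      exact aux_mul_mem G _ _ (aux_mul_mem G _ _ hYm hM₁mem.1) (fun i j => hσΓ _ (hYim i j)) i j
    · exact aux_mul_mem Ep _ _ (aux_mul_mem Ep _ _ hZm hM₂mem.1) (fun i j => hσEp _ (hZim i j)) i j
  · intro i j
    apply hinter
    · rw [eV]
      exact aux_mul_mem G _ _ (aux_mul_mem G _ _ (fun i j => hσΓ _ (hYm i j)) hM₁mem.2.1) hYim i j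
    · exact aux_mul_mem Ep _ _ (aux_mul_mem Ep _ _ (fun i j => hσEp _ (hZm i j)) hM₂mem.2.1) hZim i j
  · intro i j
    apply hinter
    · rw [eN]
      exact aux_mul_mem G _ _ (fun i j => G.sub_mem (aux_mul_mem G _ _ hYm hM₁mem.2.2 i j)
        (hdΓ _ (hYm i j))) hYim i j
    · exact aux_mul_mem Ep _ _ (fun i j => Ep.sub_mem (aux_mul_mem Ep _ _ hZm hM₂mem.2.2 i j)
        (hdEp _ (hZm i j))) hZim i j
  · have : (Z * Φ₂ * Zi.map ⇑σ) * (Z.map ⇑σ * B₂ * Zi) = Z * Φ₂ * (Zi.map ⇑σ * Z.map ⇑σ) * B₂ * Zi := by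
      noncomm_ring
    rw [this, sZ2, mul_one, mul_assoc Z, hM₂FV.1]; simp [hZ1]
  · have : (Z.map ⇑σ * B₂ * Zi) * (Z * Φ₂ * Zi.map ⇑σ) = Z.map ⇑σ * B₂ * (Zi * Z) * Φ₂ * Zi.map ⇑σ := by
      noncomm_ring
    rw [this, hZ2, mul_one, mul_assoc (Z.map ⇑σ), hM₂FV.2]; simp [sZ1]
  · rw [aux_map_d d hadd hmul, aux_map_d d hadd hmul, dsig Zi hZim, add_mul, smul', ssub, smul']
    exact aux_F c Z Zi (Z.map ⇑σ) (Zi.map ⇑σ) Φ₂ N₂ (N₂.map ⇑σ) _ _ _ _ hZ2 sZ2 sdZi hM₂Fcompat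
  · rw [aux_map_d d hadd hmul, aux_map_d d hadd hmul, dsig Z hZm, add_mul, smul', ssub, smul']
    exact aux_V c Z Zi (Z.map ⇑σ) (Zi.map ⇑σ) B₂ N₂ (N₂.map ⇑σ) _ _ _ _ hZ2 sZ2 hdZi hM₂Vcompat
end
section
variable (p : ℕ) [Fact p.Prime] (k : Type*) [Field k] [CharP k p] [PerfectRing k p]

theorem aux_algp : algebraMap (LaurentSeries (WittVector p k)) (GammaRing p k)
    (p : LaurentSeries (WittVector p k)) = (p : GammaRing p k) := map_natCast _ _

theorem aux_G_dvd (n : ℕ) (x : LaurentSeries (WittVector p k)) :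
    (p : GammaRing p k) ^ n ∣ algebraMap (LaurentSeries (WittVector p k)) (GammaRing p k) x ↔
      (p : LaurentSeries (WittVector p k)) ^ n ∣ x := by
  rw [← aux_algp]; exact aux_alg_dvd _ n x

theorem aux_G_reg (x : GammaRing p k) (h : (p : GammaRing p k) * x = 0) : x = 0 := by
  rw [← aux_algp] at h
  exact aux_regular _ (aux_L_reg p k) x h

theorem aux_G_reg_pow (n : ℕ) (x : GammaRing p k) (h : (p : GammaRing p k) ^ n * x = 0) : x = 0 := by
  induction n with
  | zero => simpa using h
  | succ n ih => 
    rw [pow_succ', mul_assoc] at h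
    exact ih (aux_G_reg p k _ h)

theorem aux_G_sep (x : GammaRing p k) (h : ∀ n, (p : GammaRing p k) ^ n ∣ x) : x = 0 := by
  apply aux_sep
  rw [aux_algp]
  exact h

theorem aux_G_alg_inj : Function.Injective
    (algebraMap (LaurentSeries (WittVector p k)) (GammaRing p k)) := by
  rw [injective_iff_map_eq_zero]
  intro x hx
  apply aux_L_sep
  intro n
  rw [← aux_G_dvd, hx]
  exact dvd_zero _

/-- reduction `Γ → k((u))` -/
def aux_rho : GammaRing p k →+* LaurentSeries k :=
  (Ideal.Quotient.lift (Ideal.span {(p : LaurentSeries (WittVector p k))}) (aux_red p k)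
    (fun a ha => (aux_red_zero p k a).2 (Ideal.mem_span_singleton.1 ha))).comp
    (AdicCompletion.evalOneₐ (Ideal.span {(p : LaurentSeries (WittVector p k))})).toRingHom

theorem aux_rho_alg (x : LaurentSeries (WittVector p k)) :
    aux_rho p k (algebraMap (LaurentSeries (WittVector p k)) (GammaRing p k) x) = aux_red p k x := by
  change Ideal.Quotient.lift (Ideal.span {(p : LaurentSeries (WittVector p k))}) (aux_red p k)
    (fun a ha => (aux_red_zero p k a).2 (Ideal.mem_span_singleton.1 ha)) (AdicCompletion.evalOneₐ (Ideal.span {(p : LaurentSeries (WittVector p k))})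
      (algebraMap (LaurentSeries (WittVector p k)) (GammaRing p k) x)) = _
  rw [AlgHom.commutes]
  rfl

theorem aux_rho_zero (x : GammaRing p k) : aux_rho p k x = 0 ↔ (p : GammaRing p k) ∣ x := by
  obtain ⟨r, y, hr⟩ := aux_approx (p : LaurentSeries (WittVector p k)) 1 x
  rw [aux_algp, pow_one] at hr
  have hp : aux_rho p k (p : GammaRing p k) = 0 := by
    rw [← aux_algp, aux_rho_alg, aux_red_zero]
  have hx : x = algebraMap (LaurentSeries (WittVector p k)) (GammaRing p k) r + p * y := by
    rw [← hr]; ring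
  rw [hx, map_add, map_mul, hp, zero_mul, add_zero, aux_rho_alg, aux_red_zero]
  rw [dvd_add_left (dvd_mul_right _ _)]
  have := aux_G_dvd p k 1 r
  rw [pow_one, pow_one] at this
  exact this.symm

theorem aux_G_unit (x : GammaRing p k) (h : ¬ (p : GammaRing p k) ∣ x) : IsUnit x := by
  rw [← aux_rho_zero] at h
  obtain ⟨y, hy⟩ := aux_red_surj p k (aux_rho p k x)⁻¹
  apply aux_unit _ x (algebraMap (LaurentSeries (WittVector p k)) (GammaRing p k) y)
  rw [aux_algp]
  refine (aux_rho_zero p k _).1 ?_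
  rw [map_sub, map_mul, aux_rho_alg, hy, map_one, mul_inv_cancel₀ h, sub_self]

theorem aux_G_factor (x : GammaRing p k) (h : x ≠ 0) :
    ∃ (m : ℕ) (v : GammaRing p k), IsUnit v ∧ x = (p : GammaRing p k) ^ m * v := by
  classical
  have hex : ∃ n, ¬ (p : GammaRing p k) ^ n ∣ x := by
    by_contra! hc
    exact h (aux_G_sep p k x hc)
  obtain ⟨n, hn, hmin⟩ : ∃ n, ¬ (p : GammaRing p k) ^ n ∣ x ∧ ∀ m < n, (p : GammaRing p k) ^ m ∣ x :=
    ⟨Nat.find hex, Nat.find_spec hex, fun m hm => not_not.1 (Nat.find_min hex hm)⟩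
  cases n with
  | zero => exact absurd (by simp) hn
  | succ n =>
    obtain ⟨v, hv⟩ := hmin n (Nat.lt_succ_self n)
    refine ⟨n, v, aux_G_unit p k v ?_, hv⟩
    rintro ⟨w, rfl⟩
    exact hn ⟨w, by rw [hv]; ring⟩

theorem aux_E_inj : Function.Injective (gammaToE p k) :=
  IsFractionRing.injective (GammaRing p k) (ERing p k)

theorem aux_E_pinv : ∃ q : ERing p k, (p : ERing p k) * q = 1 := by
  have : (p : GammaRing p k) ∈ nonZeroDivisors (GammaRing p k) := by
    rw [mem_nonZeroDivisors_iff_right]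
    intro x hx
    exact aux_G_reg p k x (by rw [mul_comm]; exact hx)
  have hu := IsLocalization.map_units (ERing p k) (⟨_, this⟩ : nonZeroDivisors (GammaRing p k))
  simp only [map_natCast] at hu
  exact hu.exists_right_inv

theorem aux_G_nontriv : Nontrivial (GammaRing p k) := (aux_rho p k).domain_nontrivial

theorem aux_E_denom (e : ERing p k) : ∃ (j : ℕ) (g : GammaRing p k),
    (p : ERing p k) ^ j * e = gammaToE p k g := by
  have := aux_G_nontriv p k
  obtain ⟨⟨a, s⟩, has⟩ := IsLocalization.surj (nonZeroDivisors (GammaRing p k)) e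
  obtain ⟨m, v, hv, hs⟩ := aux_G_factor p k s.1 (nonZeroDivisors.ne_zero s.2)
  obtain ⟨w, hw⟩ := hv.exists_right_inv
  refine ⟨m, a * w, ?_⟩
  simp only at has
  have hw' := congrArg (gammaToE p k) hw
  rw [hs] at has
  simp only [map_mul, map_pow, map_natCast, map_one] at has hw' ⊢
  linear_combination (gammaToE p k w) * has - (p : ERing p k) ^ m * e * hw'

theorem aux_ps_inj : Function.Injective (psToE p k) :=
  (aux_E_inj p k).comp ((aux_G_alg_inj p k).comp HahnSeries.ofPowerSeries_injective)

/-- `𝓔_+` as a subring. -/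
def aux_Ep : Subring (ERing p k) where
  carrier := EPlusSet p k
  mul_mem' := by
    rintro x y ⟨g, i, hg⟩ ⟨h, j, hh⟩
    exact ⟨g * h, i + j, by rw [map_mul, ← hg, ← hh]; ring⟩
  one_mem' := ⟨1, 0, by simp⟩
  add_mem' := by
    rintro x y ⟨g, i, hg⟩ ⟨h, j, hh⟩
    refine ⟨(p : PowerSeries (WittVector p k)) ^ j * g + (p : PowerSeries (WittVector p k)) ^ i * h, i + j, ?_⟩
    rw [map_add, map_mul, map_mul, map_pow, map_pow, map_natCast, ← hg, ← hh]; ring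
  zero_mem' := ⟨0, 0, by simp⟩
  neg_mem' := by
    rintro x ⟨g, i, hg⟩
    exact ⟨-g, i, by rw [map_neg, ← hg]; ring⟩

theorem aux_inter (x : ERing p k) (h1 : x ∈ (gammaToE p k).range) (h2 : x ∈ aux_Ep p k) :
    x ∈ (psToE p k).range := by
  obtain ⟨g, rfl⟩ := h1
  obtain ⟨h, j, hh⟩ := h2
  have e1 : (p : GammaRing p k) ^ j * g =
      algebraMap (LaurentSeries (WittVector p k)) (GammaRing p k) (HahnSeries.ofPowerSeries ℤ _ h) := by
    apply aux_E_inj p k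
    rw [map_mul, map_pow, map_natCast]
    exact hh
  have e2 := (aux_G_dvd p k j _).1 ⟨g, e1.symm⟩
  rw [aux_p_dvd_iff] at e2
  have e3 : ∀ i : ℕ, ∃ c, PowerSeries.coeff i h = (p : WittVector p k) ^ j * c := by
    intro i
    have := e2 i
    rwa [LaurentSeries.coeff_coe_powerSeries] at this
  choose f hf using e3
  have e4 : h = (p : PowerSeries (WittVector p k)) ^ j * PowerSeries.mk f := by
    ext1 i
    have : (p : PowerSeries (WittVector p k)) = PowerSeries.C (p : WittVector p k) := by simp
    rw [this, ← map_pow, PowerSeries.coeff_C_mul, PowerSeries.coeff_mk, hf]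
  refine ⟨PowerSeries.mk f, ?_⟩
  change gammaToE p k _ = gammaToE p k g
  congr 1
  symm
  rw [← sub_eq_zero]
  apply aux_G_reg_pow p k j
  rw [mul_sub, e1, e4, map_mul, map_pow, map_natCast, map_mul, map_pow, map_natCast]
  exact sub_self _

theorem aux_dsigma
    (σ : ERing p k →+* ERing p k)
    (hσu : σ (uE p k) = uE p k ^ p)
    (hσO : ∀ a : WittVector p k, σ (wittToE p k a) = wittToE p k (WittVector.frobenius a))
    (hσΓp : Set.MapsTo σ (GammaPlusSet p k) (GammaPlusSet p k))
    (d : Derivation ℤ (ERing p k) (ERing p k))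
    (hdu : d (uE p k) = 1)
    (hdO : ∀ a : WittVector p k, d (wittToE p k a) = 0)
    (hdΓp : Set.MapsTo d (GammaPlusSet p k) (GammaPlusSet p k))
    (c : ERing p k) (hc : c = (p : ERing p k) * uE p k ^ (p - 1))
    (x : ERing p k) (hx : x ∈ aux_Ep p k) : d (σ x) = c * σ (d x) := by
  have hu : psToE p k PowerSeries.X = uE p k := by
    unfold uE
    simp only [psToE, RingHom.comp_apply, HahnSeries.ofPowerSeries_X]
  have hC : ∀ a, psToE p k (PowerSeries.C a) = wittToE p k a := by
    intro a
    simp only [psToE, RingHom.comp_apply, HahnSeries.ofPowerSeries_C]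
  have hcm : c ∈ (psToE p k).range := by
    refine ⟨(p : PowerSeries _) * PowerSeries.X ^ (p - 1), ?_⟩
    rw [map_mul, map_natCast, map_pow, hu, hc]
  have hdu' : d (σ (uE p k)) = c * σ (d (uE p k)) := by
    rw [hσu, hdu, map_one, mul_one, Derivation.leibniz_pow, hdu, hc]
    simp [nsmul_eq_mul]
  have hmul : ∀ a b, d (σ a) = c * σ (d a) →
      d (σ (a * b)) - c * σ (d (a * b)) = σ a * (d (σ b) - c * σ (d b)) := by
    intro a b h
    simp only [map_mul, Derivation.leibniz, smul_eq_mul, map_add]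
    linear_combination σ b * h
  -- key divisibility
  have key : ∀ (n : ℕ) (g : PowerSeries (WittVector p k)), ∃ h,
      d (σ (psToE p k g)) - c * σ (d (psToE p k g)) = psToE p k (PowerSeries.X ^ n * h) := by
    intro n
    induction n with
    | zero =>
      intro g
      have h1 : d (σ (psToE p k g)) ∈ (psToE p k).range := hdΓp (hσΓp ⟨g, rfl⟩)
      have h2 : σ (d (psToE p k g)) ∈ (psToE p k).range := hσΓp (hdΓp ⟨g, rfl⟩)
      obtain ⟨h, hh⟩ := sub_mem h1 (mul_mem hcm h2)
      exact ⟨h, by rw [pow_zero, one_mul, hh]⟩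
    | succ n ih =>
      intro g
      obtain ⟨g', hg'⟩ : ∃ g', g = PowerSeries.X * g' + PowerSeries.C (PowerSeries.constantCoeff g) :=
        ⟨_, PowerSeries.eq_X_mul_shift_add_const g⟩
      obtain ⟨h, hh⟩ := ih g'
      have e1 := hmul (uE p k) (psToE p k g') hdu'
      rw [hh, hσu] at e1
      have hp : p = (p - 1) + 1 := (Nat.succ_pred_prime Fact.out).symm
      refine ⟨PowerSeries.X ^ (p - 1) * h, ?_⟩
      have e2 : psToE p k g = uE p k * psToE p k g' + wittToE p k (PowerSeries.constantCoeff g) := by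
        conv_lhs => rw [hg']
        rw [map_add, map_mul, hu, hC]
      have e3 : uE p k ^ p = uE p k ^ (p - 1) * uE p k := by
        rw [← pow_succ, ← hp]
      rw [e2, map_add, map_add, map_add, map_add, hσO, hdO, hdO, map_zero, add_zero, add_zero, e1, e3,
        map_mul, map_mul, map_mul, map_pow, map_pow, map_pow, hu]
      ring
  have hG : ∀ g, d (σ (psToE p k g)) - c * σ (d (psToE p k g)) = 0 := by
    intro g
    obtain ⟨h, hh⟩ := key 0 g
    rw [pow_zero, one_mul] at hh
    rw [hh]
    have : h = 0 := by
      ext1 i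
      obtain ⟨h', hh'⟩ := key (i+1) g
      rw [hh] at hh'
      rw [aux_ps_inj p k hh', PowerSeries.coeff_X_pow_mul', if_neg (by omega), map_zero]
    rw [this, map_zero]
  obtain ⟨g, j, hg⟩ := hx
  have h0 := hG g
  rw [← hg] at h0
  rw [hmul _ _ (by rw [← Nat.cast_pow, map_natCast, Derivation.map_natCast, map_zero, mul_zero])] at h0
  obtain ⟨q, hq⟩ := aux_E_pinv p k
  rw [map_pow, map_natCast] at h0
  have h1 : d (σ x) - c * σ (d x) = q ^ j * ((p : ERing p k) ^ j * (d (σ x) - c * σ (d x))) := by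
    rw [← mul_assoc, ← mul_pow, mul_comm q, hq, one_pow, one_mul]
  rw [h0, mul_zero] at h1
  exact sub_eq_zero.1 h1
end
section
theorem aux_ps_of_order {k : Type*} [Field k] (x : LaurentSeries k) (hx : 0 ≤ x.order) :
    ∃ f : PowerSeries k, HahnSeries.ofPowerSeries ℤ k f = x := by
  obtain ⟨m, hm⟩ := Int.eq_ofNat_of_zero_le hx
  refine ⟨PowerSeries.X ^ m * x.powerSeriesPart, ?_⟩
  exact LaurentSeries.X_order_mul_powerSeriesPart hm.symm

theorem aux_primitive {k : Type*} [Field k] {n : ℕ} (w : Fin n → LaurentSeries k) (hw : w ≠ 0) :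
    ∃ (i₀ : Fin n) (a : LaurentSeries k) (f : Fin n → PowerSeries k), f i₀ = 1 ∧
      ∀ i, HahnSeries.ofPowerSeries ℤ k (f i) = w i * a := by
  classical
  obtain ⟨i₁, hi₁⟩ := Function.ne_iff.1 hw
  obtain ⟨i₀, hi₀, hmin⟩ := Finset.exists_min_image (Finset.univ.filter fun i => w i ≠ 0)
    (fun i => (w i).order) ⟨i₁, by simpa using hi₁⟩
  have h0 : w i₀ ≠ 0 := by simpa using hi₀
  have hinv : (w i₀).order + (w i₀)⁻¹.order = 0 := by
    rw [← HahnSeries.order_mul h0 (inv_ne_zero h0), mul_inv_cancel₀ h0, HahnSeries.order_one]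
  have : ∀ i, ∃ f : PowerSeries k, HahnSeries.ofPowerSeries ℤ k f = w i * (w i₀)⁻¹ := by
    intro i
    by_cases hi : w i = 0
    · exact ⟨0, by simp [hi]⟩
    · apply aux_ps_of_order
      rw [HahnSeries.order_mul hi (inv_ne_zero h0)]
      have := hmin i (by simpa using hi)
      omega
  choose f hf using this
  refine ⟨i₀, (w i₀)⁻¹, f, ?_, hf⟩
  apply HahnSeries.ofPowerSeries_injective (Γ := ℤ)
  rw [hf, mul_inv_cancel₀ h0, map_one]

variable (p : ℕ) [Fact p.Prime] (k : Type*) [Field k] [CharP k p] [PerfectRing k p]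

theorem aux_red_ps (F : PowerSeries (WittVector p k)) :
    aux_red p k (HahnSeries.ofPowerSeries ℤ _ F) =
      HahnSeries.ofPowerSeries ℤ k (PowerSeries.map WittVector.constantCoeff F) := by
  refine HahnSeries.ext (funext fun i => ?_)
  rw [aux_red_coeff, PowerSeries.coeff_coe, PowerSeries.coeff_coe]
  split_ifs
  · exact map_zero _
  · rw [PowerSeries.coeff_map]

theorem aux_decomp {n : ℕ} (m : ℕ) : ∀ (X : Matrix (Fin n) (Fin n) (GammaRing p k)) (v : GammaRing p k),
    IsUnit v → X.det = (p : GammaRing p k) ^ m * v →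
    ∃ (Z Zi : Matrix (Fin n) (Fin n) (ERing p k)) (Y Yi : Matrix (Fin n) (Fin n) (GammaRing p k)),
      Z * Zi = 1 ∧ Y * Yi = 1 ∧ (∀ i j, Z i j ∈ aux_Ep p k) ∧ (∀ i j, Zi i j ∈ aux_Ep p k) ∧
      Z * X.map (gammaToE p k) = Y.map (gammaToE p k) := by
  classical
  induction m with
  | zero =>
    intro X v hv hX
    have hu : IsUnit X.det := by rw [hX, pow_zero, one_mul]; exact hv
    have h1 : ∀ i j, (1 : Matrix (Fin n) (Fin n) (ERing p k)) i j ∈ aux_Ep p k := by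
      intro i j
      rw [Matrix.one_apply]
      split_ifs
      · exact one_mem _
      · exact zero_mem _
    exact ⟨1, 1, X, X⁻¹, one_mul _, Matrix.mul_nonsing_inv X hu, h1, h1, one_mul _⟩
  | succ m ih =>
    intro X v hv hX
    have hdet : (X.map (aux_rho p k)).det = 0 := by
      have := (RingHom.map_det (aux_rho p k) X)
      rw [RingHom.mapMatrix_apply] at this
      rw [← this, aux_rho_zero, hX, pow_succ', mul_assoc]
      exact dvd_mul_right _ _
    obtain ⟨w, hw0, hw⟩ := Matrix.exists_vecMul_eq_zero_iff.2 hdet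
    obtain ⟨i₀, a, f, hf1, hf⟩ := aux_primitive w hw0
    have hlift : ∀ i, ∃ F : PowerSeries (WittVector p k),
        PowerSeries.map WittVector.constantCoeff F = f i ∧ (i = i₀ → F = 1) := by
      intro i
      by_cases hi : i = i₀
      · exact ⟨1, by rw [hi, hf1, map_one], fun _ => rfl⟩
      · refine ⟨PowerSeries.mk fun j => WittVector.teichmuller p (PowerSeries.coeff j (f i)), ?_,
          fun h => absurd h hi⟩
        ext j
        rw [PowerSeries.coeff_map, PowerSeries.coeff_mk]
        exact WittVector.teichmuller_coeff_zero p _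
    choose F hF hF1 using hlift
    have hF1 : F i₀ = 1 := hF1 i₀ rfl
    -- the image in Γ
    let t : PowerSeries (WittVector p k) →+* GammaRing p k :=
      (algebraMap (LaurentSeries (WittVector p k)) (GammaRing p k)).comp
        (HahnSeries.ofPowerSeries ℤ (WittVector p k))
    have ht : ∀ i, aux_rho p k (t (F i)) = w i * a := by
      intro i
      change aux_rho p k (algebraMap (LaurentSeries (WittVector p k)) (GammaRing p k)
        (HahnSeries.ofPowerSeries ℤ _ (F i))) = _
      rw [aux_rho_alg, aux_red_ps, hF, hf]
    have hdvd : ∀ j, (p : GammaRing p k) ∣ ∑ l, t (F l) * X l j := by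
      intro j
      rw [← aux_rho_zero, map_sum]
      simp only [map_mul, ht]
      have := congrFun hw j
      simp only [Matrix.vecMul, dotProduct, Matrix.map_apply, Pi.zero_apply] at this
      calc ∑ l, w l * a * aux_rho p k (X l j) = a * ∑ l, w l * aux_rho p k (X l j) := by
            rw [Finset.mul_sum]; exact Finset.sum_congr rfl fun _ _ => by ring
        _ = 0 := by rw [this, mul_zero]
    choose r hr using hdvd
    obtain ⟨q, hq⟩ := aux_E_pinv p k
    have hdet' : (X.updateRow i₀ r).det = (p : GammaRing p k) ^ m * v := by
      have e1 : X.updateRow i₀ ((p : GammaRing p k) • r) = X.updateRow i₀ (∑ l, t (F l) • X l) := by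
        congr 1
        ext1 j
        simp only [Pi.smul_apply, smul_eq_mul, Finset.sum_apply, ← hr]
      have e2 := Matrix.det_updateRow_sum X i₀ (fun l => t (F l))
      rw [← e1, Matrix.det_updateRow_smul, hF1, map_one, one_smul, hX] at e2
      rw [← sub_eq_zero]
      apply aux_G_reg p k
      rw [mul_sub, e2]; ring
    obtain ⟨Z, Zi, Y, Yi, hZ, hY, hZm, hZim, hZY⟩ := ih _ v hv hdet'
    have psm : ∀ g, psToE p k g ∈ aux_Ep p k := fun g => ⟨g, 0, by simp⟩
    have qm : q ∈ aux_Ep p k := ⟨1, 1, by rw [pow_one, hq, map_one]⟩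
    let e : Fin n → ERing p k := fun l => psToE p k (F l)
    have he0 : e i₀ = 1 := by simp only [e, hF1, map_one]
    let T : Matrix (Fin n) (Fin n) (ERing p k) := Matrix.updateRow 1 i₀ (fun l => q * e l)
    let Ti : Matrix (Fin n) (Fin n) (ERing p k) :=
      Matrix.updateRow 1 i₀ (fun l => if l = i₀ then (p : ERing p k) else - e l)
    have hTi : Ti * T = 1 := by
      ext i j
      by_cases hi : i = i₀
      · subst hi
        rw [Matrix.mul_apply, ← Finset.add_sum_erase _ _ (Finset.mem_univ i)]
        have h1 : ∑ l ∈ Finset.univ.erase i, Ti i l * T l j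
            = ∑ l ∈ Finset.univ.erase i, if l = j then - e j else 0 := by
          refine Finset.sum_congr rfl fun l hl => ?_
          have hl : l ≠ i := Finset.ne_of_mem_erase hl
          simp only [Ti, T, Matrix.updateRow_self, Matrix.updateRow_ne hl, if_neg hl, Matrix.one_apply]
          by_cases hlj : l = j
          · rw [if_pos hlj, if_pos hlj, mul_one, hlj]
          · rw [if_neg hlj, if_neg hlj, mul_zero]
        rw [h1, Finset.sum_ite_eq']
        simp only [Ti, T, Matrix.updateRow_self, if_true, Matrix.one_apply]
        rw [← mul_assoc, hq, one_mul]
        by_cases hij : i = j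
        · rw [if_pos hij, if_neg (fun h => Finset.ne_of_mem_erase h hij.symm), ← hij, he0, add_zero]
        · rw [if_neg hij, if_pos (Finset.mem_erase.2 ⟨fun h => hij h.symm, Finset.mem_univ _⟩), add_neg_cancel]
      · have h1 : ∀ l, Ti i l = if i = l then 1 else 0 := fun l => by
          simp only [Ti, Matrix.updateRow_ne hi, Matrix.one_apply]
        simp only [Matrix.mul_apply, h1, ite_mul, one_mul, zero_mul, Finset.sum_ite_eq, Finset.mem_univ,
          if_true]
        simp only [T, Matrix.updateRow_ne hi]
    have hTX : T * X.map (gammaToE p k) = (X.updateRow i₀ r).map (gammaToE p k) := by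
      ext i j
      by_cases hi : i = i₀
      · subst hi
        have h1 := congrArg (gammaToE p k) (hr j)
        rw [map_sum, map_mul, map_natCast] at h1
        simp only [map_mul] at h1
        simp only [T, Matrix.mul_apply, Matrix.updateRow_self, Matrix.map_apply]
        calc ∑ l, q * e l * gammaToE p k (X l j) = q * ∑ l, gammaToE p k (t (F l)) * gammaToE p k (X l j) := by
              rw [Finset.mul_sum]; exact Finset.sum_congr rfl fun _ _ => mul_assoc _ _ _
          _ = _ := by rw [h1]; linear_combination gammaToE p k (r j) * hq
      · simp only [T, Matrix.mul_apply, Matrix.map_apply, Matrix.updateRow_ne hi, Matrix.one_apply,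
          ite_mul, one_mul, zero_mul, Finset.sum_ite_eq, Finset.mem_univ, if_true]
    have hTm : ∀ i j, T i j ∈ aux_Ep p k := by
      intro i j
      by_cases hi : i = i₀
      · subst hi
        simp only [T, Matrix.updateRow_self]
        exact mul_mem qm (psm _)
      · simp only [T, Matrix.updateRow_ne hi, Matrix.one_apply]
        split_ifs
        · exact one_mem _
        · exact zero_mem _
    have hTim : ∀ i j, Ti i j ∈ aux_Ep p k := by
      intro i j
      by_cases hi : i = i₀
      · subst hi
        simp only [Ti, Matrix.updateRow_self]
        split_ifs
        · exact natCast_mem _ _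
        · exact neg_mem (psm _)
      · simp only [Ti, Matrix.updateRow_ne hi, Matrix.one_apply]
        split_ifs
        · exact one_mem _
        · exact zero_mem _
    refine ⟨Z * T, Ti * Zi, Y, Yi, ?_, hY, aux_mul_mem _ _ _ hZm hTm, aux_mul_mem _ _ _ hTim hZim, ?_⟩
    · rw [mul_assoc, ← mul_assoc T, mul_eq_one_comm.1 hTi, one_mul, hZ]
    · rw [mul_assoc, hTX, hZY]

theorem aux_decompE {n : ℕ} (X Xi : Matrix (Fin n) (Fin n) (ERing p k)) (hX : X * Xi = 1) :
    ∃ (Z Zi Y Yi : Matrix (Fin n) (Fin n) (ERing p k)),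
      Z * Zi = 1 ∧ Y * Yi = 1 ∧ Z * X = Y ∧ (∀ i j, Z i j ∈ aux_Ep p k) ∧ (∀ i j, Zi i j ∈ aux_Ep p k) ∧
      (∀ i j, Y i j ∈ (gammaToE p k).range) ∧ (∀ i j, Yi i j ∈ (gammaToE p k).range) := by
  classical
  have hntG := aux_G_nontriv p k
  have hntE : Nontrivial (ERing p k) := (aux_E_inj p k).nontrivial
  obtain ⟨q, hq⟩ := aux_E_pinv p k
  -- common denominator
  choose jf gf hg using fun ij : Fin n × Fin n => aux_E_denom p k (X ij.1 ij.2)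
  let J : ℕ := ∑ ij, jf ij
  have hJ : ∀ ij, jf ij ≤ J := fun ij =>
    Finset.single_le_sum (f := jf) (fun _ _ => Nat.zero_le _) (Finset.mem_univ ij)
  let X0 : Matrix (Fin n) (Fin n) (GammaRing p k) :=
    fun i j => (p : GammaRing p k) ^ (J - jf (i, j)) * gf (i, j)
  have hX0 : X0.map (gammaToE p k) = (p : ERing p k) ^ J • X := by
    ext i j
    have h1 := hg (i, j)
    rw [Matrix.map_apply, Matrix.smul_apply, smul_eq_mul]
    change gammaToE p k ((p : GammaRing p k) ^ (J - jf (i, j)) * gf (i, j)) = _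
    rw [map_mul, map_pow, map_natCast, ← h1, ← mul_assoc, ← pow_add, Nat.sub_add_cancel (hJ _)]
  have hqJ : q ^ J * (p : ERing p k) ^ J = 1 := by rw [← mul_pow, mul_comm, hq, one_pow]
  have hdet : X0.det ≠ 0 := by
    intro h0
    have h1 := RingHom.map_det (gammaToE p k) X0
    rw [RingHom.mapMatrix_apply, hX0, h0, map_zero] at h1
    have h2 : ((p : ERing p k) ^ J • X) * (q ^ J • Xi) = 1 := by
      rw [smul_mul_smul_comm, hX, mul_comm, hqJ, one_smul]
    have h3 := congrArg Matrix.det h2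
    rw [Matrix.det_mul, ← h1, zero_mul, Matrix.det_one] at h3
    exact zero_ne_one h3
  obtain ⟨m, v, hv, hm⟩ := aux_G_factor p k _ hdet
  obtain ⟨Z, Zi, Y, Yi, hZ, hY, hZm, hZim, hZY⟩ := aux_decomp p k m X0 v hv hm
  have qm : q ∈ aux_Ep p k := ⟨1, 1, by rw [pow_one, hq, map_one]⟩
  refine ⟨(p : ERing p k) ^ J • Z, q ^ J • Zi, Y.map (gammaToE p k), Yi.map (gammaToE p k), ?_, ?_, ?_, ?_, ?_,
    fun i j => ⟨Y i j, rfl⟩, fun i j => ⟨Yi i j, rfl⟩⟩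
  · rw [smul_mul_smul_comm, hZ, mul_comm, hqJ, one_smul]
  · rw [← Matrix.map_mul, hY, Matrix.map_one _ (map_zero _) (map_one _)]
  · rw [← hZY, hX0, smul_mul_assoc, mul_smul_comm]
  · intro i j
    exact mul_mem (pow_mem (natCast_mem _ _) _) (hZm i j)
  · intro i j
    exact mul_mem (pow_mem qm _) (hZim i j)
end

theorem statement5 (p : ℕ) [Fact p.Prime] (k : Type*) [Field k] [CharP k p]
    [PerfectRing k p]
    -- the Frobenius lift `σ` on `𝓔` (with `f = 1`, `q = p`):
    (σ : ERing p k →+* ERing p k)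
    (hσu : σ (uE p k) = uE p k ^ p)
    (hσO : ∀ a : WittVector p k, σ (wittToE p k a) = wittToE p k (WittVector.frobenius a))
    (hσΓ : Set.MapsTo σ (GammaSet p k) (GammaSet p k))
    (hσΓp : Set.MapsTo σ (GammaPlusSet p k) (GammaPlusSet p k))
    (hσEp : Set.MapsTo σ (EPlusSet p k) (EPlusSet p k))
    -- the derivation `d = d/du` on `𝓔`:
    (d : Derivation ℤ (ERing p k) (ERing p k))
    (hdu : d (uE p k) = 1)
    (hdO : ∀ a : WittVector p k, d (wittToE p k a) = 0)
    (hdΓ : Set.MapsTo d (GammaSet p k) (GammaSet p k))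
    (hdΓp : Set.MapsTo d (GammaPlusSet p k) (GammaPlusSet p k))
    (hdEp : Set.MapsTo d (EPlusSet p k) (EPlusSet p k))
    -- `c = dσ(u)/du = p·u^{p−1}`:
    (c : ERing p k) (hc : c = (p : ERing p k) * uE p k ^ (p - 1))
    -- `M₁`, a Dieudonné module over `Γ` of rank `n`:
    (n : ℕ) (Φ₁ B₁ N₁ : Matrix (Fin n) (Fin n) (ERing p k))
    (hM₁mem : (∀ i j, Φ₁ i j ∈ GammaSet p k) ∧ (∀ i j, B₁ i j ∈ GammaSet p k) ∧
      (∀ i j, N₁ i j ∈ GammaSet p k))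
    (hM₁FV : Φ₁ * B₁ = (p : ERing p k) • 1 ∧ B₁ * Φ₁ = (p : ERing p k) • 1)
    (hM₁Fcompat : Φ₁.map ⇑d + N₁ * Φ₁ = c • (Φ₁ * N₁.map ⇑σ))
    (hM₁Vcompat : B₁.map ⇑d + c • (N₁.map ⇑σ * B₁) = B₁ * N₁)
    -- `M₂`, a Dieudonné module over `𝓔_+` of rank `n`:
    (Φ₂ B₂ N₂ : Matrix (Fin n) (Fin n) (ERing p k))
    (hM₂mem : (∀ i j, Φ₂ i j ∈ EPlusSet p k) ∧ (∀ i j, B₂ i j ∈ EPlusSet p k) ∧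
      (∀ i j, N₂ i j ∈ EPlusSet p k))
    (hM₂FV : Φ₂ * B₂ = (p : ERing p k) • 1 ∧ B₂ * Φ₂ = (p : ERing p k) • 1)
    (hM₂Fcompat : Φ₂.map ⇑d + N₂ * Φ₂ = c • (Φ₂ * N₂.map ⇑σ))
    (hM₂Vcompat : B₂.map ⇑d + c • (N₂.map ⇑σ * B₂) = B₂ * N₂)
    -- `M₁ ⊗_Γ 𝓔 ≅ M₂ ⊗_{𝓔_+} 𝓔` as Dieudonné modules over `𝓔`, via `X`:
    (X Xi : Matrix (Fin n) (Fin n) (ERing p k))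
    (hX : X * Xi = 1 ∧ Xi * X = 1)
    (hXF : X * Φ₁ = Φ₂ * X.map ⇑σ)
    (hXnabla : X.map ⇑d + N₂ * X = X * N₁)
    (hXV : B₂ * X = X.map ⇑σ * B₁) :
    -- then there is a Dieudonné module `M_+` over `Γ_+` ...
    ∃ Φp Bp Np : Matrix (Fin n) (Fin n) (ERing p k),
      ((∀ i j, Φp i j ∈ GammaPlusSet p k) ∧ (∀ i j, Bp i j ∈ GammaPlusSet p k) ∧
        (∀ i j, Np i j ∈ GammaPlusSet p k)) ∧
      (Φp * Bp = (p : ERing p k) • 1 ∧ Bp * Φp = (p : ERing p k) • 1) ∧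
      Φp.map ⇑d + Np * Φp = c • (Φp * Np.map ⇑σ) ∧
      Bp.map ⇑d + c • (Np.map ⇑σ * Bp) = Bp * Np ∧
      -- ... with `M₁ ≅ M_+ ⊗_{Γ_+} Γ` as Dieudonné modules over `Γ` (via `Y`) ...
      (∃ Y Yi : Matrix (Fin n) (Fin n) (ERing p k),
        (Y * Yi = 1 ∧ Yi * Y = 1) ∧
        (∀ i j, Y i j ∈ GammaSet p k) ∧ (∀ i j, Yi i j ∈ GammaSet p k) ∧
        Y * Φ₁ = Φp * Y.map ⇑σ ∧
        Y.map ⇑d + Np * Y = Y * N₁ ∧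
        Bp * Y = Y.map ⇑σ * B₁) ∧
      -- ... and `M₂ ≅ M_+ ⊗_{Γ_+} 𝓔_+` as Dieudonné modules over `𝓔_+` (via `Z`).
      (∃ Z Zi : Matrix (Fin n) (Fin n) (ERing p k),
        (Z * Zi = 1 ∧ Zi * Z = 1) ∧
        (∀ i j, Z i j ∈ EPlusSet p k) ∧ (∀ i j, Zi i j ∈ EPlusSet p k) ∧
        Z * Φ₂ = Φp * Z.map ⇑σ ∧
        Z.map ⇑d + Np * Z = Z * N₂ ∧
        Bp * Z = Z.map ⇑σ * B₂) := by
  obtain ⟨Z, Zi, Y, Yi, hZ1, hY1, hYZ, hZm, hZim, hYm, hYim⟩ := aux_decompE p k X Xi hX.1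
  exact aux_glue (p : ERing p k) (gammaToE p k).range (psToE p k).range (aux_Ep p k) (aux_inter p k)
    σ hσΓ hσEp d (fun a b => map_add d a b) (fun a b => d.leibniz a b) hdΓ hdEp c
    (aux_dsigma p k σ hσu hσO hσΓp d hdu hdO hdΓp c hc)
    Φ₁ B₁ N₁ hM₁mem Φ₂ B₂ N₂ hM₂mem hM₂FV hM₂Fcompat hM₂Vcompat X hXF hXnabla hXV
    Z Zi Y Yi hZ1 hY1 hYZ hZm hZim hYm hYim
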